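/- arXiv:2211.01306 — 2 statements merged into one kernel-verified Lean document; each statement's English description precedes it below -/
import Mathlib

section
/- Let K ≥ 2, τ > 0, α ∈ ℝ^K with all α_i > 0, and β ∈ ℝ^K with all β_i > 0, and let X have the inverse Schlömilch distribution IS(α, β, τ). Then for all indices i, k, the log-ratio mean satisfies E[log(X_i/X_k)] = (1/τ)[−ψ(α_i) + ψ(α_k) + log(β_i/β_k)], where ψ(x) = Γ'(x)/Γ(x) is the digamma function. -/
open MeasureTheory Finset

noncomputable def fillMap (K : ℕ) (u : Fin (K - 1) → ℝ) : Fin K → ℝ :=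
  fun i => if h : (i : ℕ) < K - 1 then u ⟨i, h⟩ else 1 - ∑ j, u j

/-- The `(K-1)`-dimensional Lebesgue measure on the probability simplex `S_K`. -/
noncomputable def simplexMeasure (K : ℕ) : Measure (Fin K → ℝ) :=
  Measure.map (fillMap K)
    (volume.restrict {u : Fin (K - 1) → ℝ | (∀ j, 0 ≤ u j) ∧ ∑ j, u j ≤ 1})

/-- The density of the inverse Schlömilch distribution `IS(α, β, τ)` on the simplex. -/
noncomputable def isDensity (K : ℕ) (α β : Fin K → ℝ) (τ : ℝ) (x : Fin K → ℝ) : ℝ :=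
  τ ^ (K - 1) * Real.Gamma (∑ i, α i) * (∑ j, β j / x j ^ τ) ^ (-(∑ i, α i)) *
    ∏ i, β i ^ (α i) / (Real.Gamma (α i) * x i ^ (τ * α i + 1))

/-- The digamma function `ψ = Γ'/Γ`. -/
noncomputable def digamma (x : ℝ) : ℝ := deriv Real.Gamma x / Real.Gamma x

/-!
Let `Z_j` be independent inverse generalized Gamma variables, `Z_j = (Y_j / β_j) ^ (-1 / τ)` with
`Y_j` Gamma distributed of shape `α_j`. In the coordinates `z = r • x`, with `r` the sum of the
coordinates of `z` and `x` on the simplex, Lebesgue measure is `r ^ (K - 1) dr dx`, and the joint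
density of the `Z_j` times this Jacobian splits as `isDensity` at `x` times an inverse generalized
Gamma density in `r`. Integrating out `r` shows that `Z / ∑ j, Z_j` has the inverse Schlömilch
distribution, so functions invariant under positive scaling have the same mean under both laws.
For `log (z_i / z_k)` this leaves the one-dimensional means
`E[log Z_j] = (log β_j - E[log Y_j]) / τ`, and `E[log Y_j] = ψ(α_j)` by differentiating the Gamma
integral under the integral sign.
-/

lemma abs_log_le_rpow_add_rpow_neg {t ε : ℝ} (ht : 0 < t) (hε : 0 < ε) :
    |Real.log t| ≤ (t ^ ε + t ^ (-ε)) / ε := by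
  have hpos : 0 < t ^ ε := Real.rpow_pos_of_pos ht ε
  have hneg : 0 < t ^ (-ε) := Real.rpow_pos_of_pos ht (-ε)
  have hupper : Real.log t ≤ t ^ ε / ε := Real.log_le_rpow_div ht.le hε
  have hlower : -Real.log t ≤ t ^ (-ε) / ε := by
    rw [← Real.log_inv, Real.rpow_neg ht.le, ← Real.inv_rpow ht.le]
    exact Real.log_le_rpow_div (inv_pos.2 ht).le hε
  rw [add_div, abs_le]
  constructor <;> linarith [div_pos hpos hε, div_pos hneg hε]

lemma integrableOn_log_mul_exp_neg_mul_rpow {a : ℝ} (ha : 0 < a) :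
    IntegrableOn (fun t : ℝ ↦ Real.log t * (Real.exp (-t) * t ^ (a - 1))) (Set.Ioi 0) := by
  have hdom := ((Real.GammaIntegral_convergent (s := a + a / 2) (by linarith)).add
    (Real.GammaIntegral_convergent (s := a - a / 2) (by linarith))).div_const (a / 2)
  refine hdom.mono' (by fun_prop) ?_
  filter_upwards [ae_restrict_mem measurableSet_Ioi] with t (ht : 0 < t)
  rw [norm_mul, Real.norm_eq_abs, Real.norm_of_nonneg (by positivity)]
  calc |Real.log t| * (Real.exp (-t) * t ^ (a - 1))
      ≤ (t ^ (a / 2) + t ^ (-(a / 2))) / (a / 2) * (Real.exp (-t) * t ^ (a - 1)) := by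
        gcongr
        exact abs_log_le_rpow_add_rpow_neg ht (half_pos ha)
    _ = (Real.exp (-t) * (t ^ (a - 1) * t ^ (a / 2)) +
          Real.exp (-t) * (t ^ (a - 1) * t ^ (-(a / 2)))) / (a / 2) := by ring
    _ = (Real.exp (-t) * t ^ (a + a / 2 - 1) + Real.exp (-t) * t ^ (a - a / 2 - 1)) / (a / 2) := by
        rw [← Real.rpow_add ht, ← Real.rpow_add ht]
        ring_nf

lemma hasDerivAt_Gamma_integral_log {a : ℝ} (ha : 0 < a) :
    HasDerivAt Real.Gamma
      (∫ t in Set.Ioi (0 : ℝ), Real.log t * (Real.exp (-t) * t ^ (a - 1))) a := by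
  have ha' : 0 < (a : ℂ).re := ha
  have hintegrand : ∀ t ∈ Set.Ioi (0 : ℝ),
      (t : ℂ) ^ ((a : ℂ) - 1) * (Real.log t * Real.exp (-t)) =
        ((Real.log t * (Real.exp (-t) * t ^ (a - 1)) : ℝ) : ℂ) := by
    intro t ht
    rw [← Complex.ofReal_one, ← Complex.ofReal_sub, ← Complex.ofReal_cpow (le_of_lt ht)]
    push_cast
    ring
  have hGammaIntegral := Complex.hasDerivAt_GammaIntegral ha'
  rw [setIntegral_congr_fun measurableSet_Ioi hintegrand, integral_complex_ofReal]
    at hGammaIntegral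
  have hGamma : Complex.Gamma =ᶠ[nhds (a : ℂ)] Complex.GammaIntegral := by
    filter_upwards [(isOpen_lt continuous_const Complex.continuous_re).mem_nhds ha'] with z hz
      using Complex.Gamma_eq_integral hz
  exact (hGammaIntegral.congr_of_eventuallyEq hGamma).real_of_complex

section Substitution

variable {E : Type*} [NormedAddCommGroup E] [NormedSpace ℝ E] {b p : ℝ}

lemma integrableOn_Ioi_comp_const_mul_rpow (hb : 0 < b) (hp : p ≠ 0) {F : ℝ → E}
    (hF : IntegrableOn F (Set.Ioi 0)) :
    IntegrableOn (fun z ↦ (|p| * z ^ (p - 1)) • b • F (b * z ^ p)) (Set.Ioi 0) := by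
  have hscaled : IntegrableOn (fun y ↦ b • F (b * y)) (Set.Ioi 0) :=
    ((integrableOn_Ioi_comp_mul_left_iff F 0 hb).2 (by rwa [mul_zero])).smul b
  exact (integrableOn_Ioi_comp_rpow_iff (fun y ↦ b • F (b * y)) hp).2 hscaled

lemma integral_Ioi_comp_const_mul_rpow (hb : 0 < b) (hp : p ≠ 0) (F : ℝ → E) :
    ∫ z in Set.Ioi (0 : ℝ), (|p| * z ^ (p - 1)) • b • F (b * z ^ p) =
      ∫ y in Set.Ioi (0 : ℝ), F y := by
  rw [integral_comp_rpow_Ioi (fun y ↦ b • F (b * y)) hp, integral_smul,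
    integral_comp_mul_left_Ioi' F 0 hb, mul_zero]

end Substitution

/-- The density of the inverse generalized Gamma distribution: the law of `(Y / b) ^ (-1 / τ)`
for `Y` Gamma distributed with shape `a` and rate `1`. Independent variables with these laws
(common `τ`), divided by their sum, have the inverse Schlömilch distribution. -/
noncomputable def invGenGammaPDF (a b τ z : ℝ) : ℝ :=
  if 0 < z then
    τ * b ^ a * z ^ (-(τ * a) - 1) * Real.exp (-(b * z ^ (-τ))) / Real.Gamma a
  else 0

section InvGenGamma

variable {a b τ z : ℝ}

lemma invGenGammaPDF_of_pos (hz : 0 < z) : invGenGammaPDF a b τ z =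
    τ * b ^ a * z ^ (-(τ * a) - 1) * Real.exp (-(b * z ^ (-τ))) / Real.Gamma a :=
  if_pos hz

lemma invGenGammaPDF_of_nonpos (hz : z ≤ 0) : invGenGammaPDF a b τ z = 0 :=
  if_neg hz.not_gt

lemma invGenGammaPDF_eq_jacobian_mul (hb : 0 < b) (hz : 0 < z) : invGenGammaPDF a b τ z =
    τ * z ^ (-τ - 1) *
      (b * (Real.exp (-(b * z ^ (-τ))) * (b * z ^ (-τ)) ^ (a - 1) / Real.Gamma a)) := by
  have hzpow : z ^ (-(τ * a) - 1) = z ^ (-τ - 1) * z ^ (-τ * (a - 1)) := by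
    rw [← Real.rpow_add hz]
    ring_nf
  have hbpow : b ^ a = b * b ^ (a - 1) := by
    rw [Real.rpow_sub_one hb.ne', mul_div_cancel₀ _ hb.ne']
  rw [invGenGammaPDF_of_pos hz, Real.mul_rpow hb.le (by positivity), ← Real.rpow_mul hz.le,
    hzpow, hbpow]
  ring

lemma comp_mul_invGenGammaPDF_eq_indicator (hb : 0 < b) (hτ : 0 < τ) (φ : ℝ → ℝ) :
    (fun z ↦ φ (b * z ^ (-τ)) * invGenGammaPDF a b τ z) =
      (Set.Ioi 0).indicator fun z ↦ (|-τ| * z ^ (-τ - 1)) • b •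
        (fun y ↦ φ y * (Real.exp (-y) * y ^ (a - 1)) / Real.Gamma a) (b * z ^ (-τ)) := by
  ext z
  rcases le_or_gt z 0 with hz | hz
  · rw [Set.indicator_of_notMem (Set.notMem_Ioi.2 hz), invGenGammaPDF_of_nonpos hz, mul_zero]
  · rw [Set.indicator_of_mem (Set.mem_Ioi.2 hz), invGenGammaPDF_eq_jacobian_mul hb hz, abs_neg,
      abs_of_pos hτ, smul_eq_mul, smul_eq_mul]
    ring

lemma integrable_comp_mul_invGenGammaPDF (hb : 0 < b) (hτ : 0 < τ) {φ : ℝ → ℝ}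
    (hφ : IntegrableOn (fun y ↦ φ y * (Real.exp (-y) * y ^ (a - 1))) (Set.Ioi 0)) :
    Integrable fun z ↦ φ (b * z ^ (-τ)) * invGenGammaPDF a b τ z := by
  rw [comp_mul_invGenGammaPDF_eq_indicator hb hτ, integrable_indicator_iff measurableSet_Ioi]
  exact integrableOn_Ioi_comp_const_mul_rpow hb (neg_ne_zero.2 hτ.ne') (hφ.div_const _)

lemma integral_comp_mul_invGenGammaPDF (hb : 0 < b) (hτ : 0 < τ) (φ : ℝ → ℝ) :
    ∫ z, φ (b * z ^ (-τ)) * invGenGammaPDF a b τ z =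
      (∫ y in Set.Ioi (0 : ℝ), φ y * (Real.exp (-y) * y ^ (a - 1))) / Real.Gamma a := by
  rw [comp_mul_invGenGammaPDF_eq_indicator hb hτ, integral_indicator measurableSet_Ioi,
    integral_Ioi_comp_const_mul_rpow hb (neg_ne_zero.2 hτ.ne')
      fun y ↦ φ y * (Real.exp (-y) * y ^ (a - 1)) / Real.Gamma a, integral_div]

lemma integrable_invGenGammaPDF (ha : 0 < a) (hb : 0 < b) (hτ : 0 < τ) :
    Integrable (invGenGammaPDF a b τ) := by
  simpa only [one_mul] using integrable_comp_mul_invGenGammaPDF hb hτ (φ := fun _ ↦ 1)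
    (by simpa only [one_mul] using Real.GammaIntegral_convergent ha)

lemma integral_invGenGammaPDF (ha : 0 < a) (hb : 0 < b) (hτ : 0 < τ) :
    ∫ z, invGenGammaPDF a b τ z = 1 := by
  have h := integral_comp_mul_invGenGammaPDF (a := a) hb hτ fun _ ↦ 1
  simpa only [one_mul, ← Real.Gamma_eq_integral ha, div_self (Real.Gamma_pos_of_pos ha).ne'] using h

lemma log_mul_invGenGammaPDF (hb : 0 < b) (hτ : 0 < τ) (z : ℝ) :
    Real.log z * invGenGammaPDF a b τ z = 1 / τ * (Real.log b * invGenGammaPDF a b τ z -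
      Real.log (b * z ^ (-τ)) * invGenGammaPDF a b τ z) := by
  rcases le_or_gt z 0 with hz | hz
  · simp only [invGenGammaPDF_of_nonpos hz, mul_zero, sub_zero]
  · rw [Real.log_mul hb.ne' (by positivity), Real.log_rpow hz]
    field

lemma integrable_log_mul_invGenGammaPDF (ha : 0 < a) (hb : 0 < b) (hτ : 0 < τ) :
    Integrable fun z ↦ Real.log z * invGenGammaPDF a b τ z := by
  simp_rw [log_mul_invGenGammaPDF hb hτ]
  exact (((integrable_invGenGammaPDF ha hb hτ).const_mul _).sub
    (integrable_comp_mul_invGenGammaPDF hb hτ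
      (integrableOn_log_mul_exp_neg_mul_rpow ha))).const_mul _

lemma integral_log_mul_invGenGammaPDF (ha : 0 < a) (hb : 0 < b) (hτ : 0 < τ) :
    ∫ z, Real.log z * invGenGammaPDF a b τ z = 1 / τ * (Real.log b - digamma a) := by
  simp_rw [log_mul_invGenGammaPDF hb hτ]
  rw [integral_const_mul, integral_sub ((integrable_invGenGammaPDF ha hb hτ).const_mul _)
      (integrable_comp_mul_invGenGammaPDF hb hτ (integrableOn_log_mul_exp_neg_mul_rpow ha)),
    integral_const_mul, integral_invGenGammaPDF ha hb hτ, mul_one,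
    integral_comp_mul_invGenGammaPDF hb hτ, digamma, (hasDerivAt_Gamma_integral_log ha).deriv]

end InvGenGamma

lemma mul_prod_eq_prod_update {ι R : Type*} [Fintype ι] [DecidableEq ι] [CommMonoid R]
    {X : ι → Type*} (f : ∀ i, X i → R) (i : ι) (φ : X i → R) (z : ∀ i, X i) :
    φ (z i) * ∏ j, f j (z j) =
      ∏ j, Function.update f i (fun t ↦ φ t * f i t) j (z j) := by
  rw [← mul_prod_erase univ _ (mem_univ i), ← mul_prod_erase univ _ (mem_univ i),
    Function.update_self, mul_assoc]
  congr 2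
  refine prod_congr rfl fun j hj ↦ ?_
  rw [Function.update_of_ne (ne_of_mem_erase hj)]

section Marginal

variable {ι 𝕜 : Type*} [Fintype ι] [RCLike 𝕜] {X : ι → Type*} [∀ i, MeasurableSpace (X i)]
  {μ : ∀ i, Measure (X i)} [∀ i, SigmaFinite (μ i)] {f : ∀ i, X i → 𝕜} {i : ι}

lemma integrable_comp_eval_mul_prod {φ : X i → 𝕜} (hf : ∀ j, j ≠ i → Integrable (f j) (μ j))
    (hφ : Integrable (fun t ↦ φ t * f i t) (μ i)) :
    Integrable (fun z : ∀ i, X i ↦ φ (z i) * ∏ j, f j (z j)) (Measure.pi μ) := by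
  classical
  simp_rw [mul_prod_eq_prod_update f i φ]
  refine Integrable.fintype_prod_dep fun j ↦ ?_
  rcases eq_or_ne j i with rfl | hj
  · rwa [Function.update_self]
  · rw [Function.update_of_ne hj]
    exact hf j hj

lemma integral_comp_eval_mul_prod (φ : X i → 𝕜) (hf : ∀ j, j ≠ i → ∫ t, f j t ∂μ j = 1) :
    ∫ z : ∀ i, X i, φ (z i) * ∏ j, f j (z j) ∂Measure.pi μ = ∫ t, φ t * f i t ∂μ i := by
  classical
  simp_rw [mul_prod_eq_prod_update f i φ]
  rw [integral_fintype_prod_eq_prod, prod_eq_single i, Function.update_self]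
  · intro j _ hj
    rw [Function.update_of_ne hj, hf j hj]
  · exact fun hi ↦ absurd (mem_univ i) hi

end Marginal

section Scaling

variable {E : Type*} [NormedAddCommGroup E] [NormedSpace ℝ E] [FiniteDimensional ℝ E]
  [MeasurableSpace E] [BorelSpace E] (μ : Measure E) [μ.IsAddHaarMeasure]

lemma ofReal_abs_pow_finrank_smul_map_smul {r : ℝ} (hr : r ≠ 0) :
    ENNReal.ofReal (|r| ^ Module.finrank ℝ E) • μ.map (r • ·) = μ := by
  rw [Measure.map_addHaar_smul μ hr, smul_smul, ← ENNReal.ofReal_mul (by positivity), abs_inv,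
    abs_pow, mul_inv_cancel₀ (by positivity), ENNReal.ofReal_one, one_smul]

lemma measurePreserving_prodMk_fst_smul_snd :
    MeasurePreserving (fun p : ℝ × E ↦ (p.1, p.1 • p.2))
      ((volume.prod μ).withDensity fun p ↦ ENNReal.ofReal (|p.1| ^ Module.finrank ℝ E))
      (volume.prod μ) := by
  have hmap : Measurable fun p : ℝ × E ↦ (p.1, p.1 • p.2) := by fun_prop
  refine ⟨hmap, Measure.ext_of_lintegral _ fun f hf ↦ ?_⟩
  have hcomp : Measurable fun p : ℝ × E ↦ f (p.1, p.1 • p.2) := by fun_prop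
  rw [lintegral_map hf hmap, lintegral_withDensity_eq_lintegral_mul _ (by fun_prop) hcomp,
    lintegral_prod _ (by fun_prop), lintegral_prod _ hf.aemeasurable]
  refine lintegral_congr_ae ?_
  filter_upwards [Measure.ae_ne volume (0 : ℝ)] with r hr
  calc ∫⁻ u, ENNReal.ofReal (|r| ^ Module.finrank ℝ E) * f (r, r • u) ∂μ
      = ENNReal.ofReal (|r| ^ Module.finrank ℝ E) * ∫⁻ w, f (r, w) ∂μ.map (r • ·) := by
        rw [lintegral_const_mul _ (by fun_prop),
          lintegral_map (f := fun w ↦ f (r, w)) (by fun_prop) (by fun_prop)]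
    _ = ∫⁻ w, f (r, w) ∂μ := by
        rw [← smul_eq_mul, ← lintegral_smul_measure, ofReal_abs_pow_finrank_smul_map_smul μ hr]

end Scaling

lemma fillMap_castSucc {n : ℕ} (u : Fin n → ℝ) (j : Fin n) :
    fillMap (n + 1) u j.castSucc = u j := by
  simp [fillMap]

lemma fillMap_last {n : ℕ} (u : Fin n → ℝ) : fillMap (n + 1) u (Fin.last n) = 1 - ∑ j, u j := by
  simp [fillMap]

lemma sum_fillMap {n : ℕ} (u : Fin n → ℝ) : ∑ j, fillMap (n + 1) u j = 1 := by
  simp only [Fin.sum_univ_castSucc, fillMap_castSucc, fillMap_last, add_sub_cancel]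

lemma fillMap_nonneg_iff {n : ℕ} (u : Fin n → ℝ) :
    (∀ j, 0 ≤ fillMap (n + 1) u j) ↔ (∀ j, 0 ≤ u j) ∧ ∑ j, u j ≤ 1 := by
  simp only [Fin.forall_fin_succ', fillMap_castSucc, fillMap_last, sub_nonneg]

lemma continuous_fillMap (K : ℕ) : Continuous (fillMap K) := by
  refine continuous_pi fun i ↦ ?_
  unfold fillMap
  split_ifs <;> fun_prop

lemma injective_fillMap (K : ℕ) : Function.Injective (fillMap K) := by
  intro u v huv
  ext j
  simpa [fillMap] using congrFun huv ⟨j, by omega⟩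

lemma measurableEmbedding_fillMap (K : ℕ) : MeasurableEmbedding (fillMap K) :=
  (continuous_fillMap K).measurableEmbedding (injective_fillMap K)

lemma measurePreserving_insertNth_last_sub_sum (n : ℕ) :
    MeasurePreserving (fun p : ℝ × (Fin n → ℝ) ↦
      (Fin.last n).insertNth (α := fun _ ↦ ℝ) (p.1 - ∑ j, p.2 j) p.2) := by
  have hshear : MeasurePreserving fun q : (Fin n → ℝ) × ℝ ↦ (q.1, q.2 - ∑ j, q.1 j) :=
    (MeasurePreserving.id volume).skew_product (g := fun (w : Fin n → ℝ) t ↦ t - ∑ j, w j)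
      (by fun_prop) <| .of_forall fun w : Fin n → ℝ ↦ map_sub_right_eq_self volume (∑ j, w j)
  exact (volume_preserving_piFinSuccAbove (fun _ ↦ ℝ) (Fin.last n)).symm.comp
    (Measure.measurePreserving_swap.comp (hshear.comp Measure.measurePreserving_swap))

lemma insertNth_last_sub_sum_smul {n : ℕ} (r : ℝ) (u : Fin n → ℝ) :
    (Fin.last n).insertNth (α := fun _ ↦ ℝ) (r - ∑ j, (r • u) j) (r • u) =
      r • fillMap (n + 1) u := by
  ext i
  refine Fin.lastCases ?_ (fun j ↦ ?_) i
  · simp [fillMap_last, mul_sub, mul_sum]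
  · simp [fillMap_castSucc]

lemma measurePreserving_smul_fillMap (n : ℕ) :
    MeasurePreserving (fun p : ℝ × (Fin n → ℝ) ↦ p.1 • fillMap (n + 1) p.2)
      (volume.withDensity fun p ↦ ENNReal.ofReal (|p.1| ^ n)) volume := by
  have hscale := measurePreserving_prodMk_fst_smul_snd (volume : Measure (Fin n → ℝ))
  rw [Module.finrank_fin_fun] at hscale
  have hcomp := (measurePreserving_insertNth_last_sub_sum n).comp hscale
  simp only [Function.comp_def, insertNth_last_sub_sum_smul] at hcomp
  exact hcomp

section Polar

variable {E : Type*} [NormedAddCommGroup E] [NormedSpace ℝ E] {n : ℕ}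

lemma integral_eq_integral_smul_fillMap {G : (Fin (n + 1) → ℝ) → E} (hG : Integrable G) :
    ∫ z, G z = ∫ u : Fin n → ℝ, ∫ r : ℝ, |r| ^ n • G (r • fillMap (n + 1) u) := by
  have hpolar := measurePreserving_smul_fillMap n
  have hdensity : Measurable fun p : ℝ × (Fin n → ℝ) ↦ ENNReal.ofReal (|p.1| ^ n) := by fun_prop
  have hfinite : ∀ᵐ p : ℝ × (Fin n → ℝ), ENNReal.ofReal (|p.1| ^ n) < ⊤ :=
    .of_forall fun _ ↦ ENNReal.ofReal_lt_top
  have htoReal (r : ℝ) : (ENNReal.ofReal (|r| ^ n)).toReal = |r| ^ n :=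
    ENNReal.toReal_ofReal (by positivity)
  have hcomp := hpolar.integrable_comp_of_integrable hG
  rw [integrable_withDensity_iff_integrable_smul' hdensity hfinite] at hcomp
  rw [← hpolar.map_eq, integral_map hpolar.aemeasurable (hpolar.map_eq ▸ hG.aestronglyMeasurable),
    integral_withDensity_eq_integral_toReal_smul hdensity hfinite]
  simp only [htoReal, Function.comp_apply] at hcomp ⊢
  exact integral_prod_symm _ hcomp

lemma integral_simplexMeasure (K : ℕ) (φ : (Fin K → ℝ) → E) :
    ∫ x, φ x ∂simplexMeasure K =
      ∫ u in {u : Fin (K - 1) → ℝ | (∀ j, 0 ≤ u j) ∧ ∑ j, u j ≤ 1}, φ (fillMap K u) :=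
  (measurableEmbedding_fillMap K).integral_map φ

lemma ae_simplexMeasure_nonneg (n : ℕ) : ∀ᵐ x ∂simplexMeasure (n + 1), ∀ j, 0 ≤ x j := by
  have hset : MeasurableSet {u : Fin n → ℝ | (∀ j, 0 ≤ u j) ∧ ∑ j, u j ≤ 1} := by measurability
  refine (measurableEmbedding_fillMap (n + 1)).ae_map_iff.2 ?_
  filter_upwards [ae_restrict_mem hset] with u hu using (fillMap_nonneg_iff u).2 hu

theorem integral_eq_integral_simplexMeasure {G : (Fin (n + 1) → ℝ) → E} (hG : Integrable G)
    (hpos : ∀ z j, z j ≤ 0 → G z = 0) :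
    ∫ z, G z =
      ∫ x, (∫ r in Set.Ioi (0 : ℝ), r ^ n • G (r • x)) ∂simplexMeasure (n + 1) := by
  have hradial (u : Fin n → ℝ) : ∫ r : ℝ, |r| ^ n • G (r • fillMap (n + 1) u) =
      ∫ r in Set.Ioi (0 : ℝ), r ^ n • G (r • fillMap (n + 1) u) := by
    obtain ⟨j, -, hj⟩ : ∃ j ∈ univ, 0 < fillMap (n + 1) u j :=
      exists_lt_of_sum_lt (f := fun _ ↦ 0) (by simp [sum_fillMap])
    have hvanish (r : ℝ) (hr : r ∉ Set.Ioi 0) : |r| ^ n • G (r • fillMap (n + 1) u) = 0 := by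
      rw [hpos _ j (mul_nonpos_of_nonpos_of_nonneg (Set.notMem_Ioi.1 hr) hj.le), smul_zero]
    rw [← setIntegral_eq_integral_of_forall_compl_eq_zero hvanish]
    refine setIntegral_congr_fun measurableSet_Ioi fun r (hr : 0 < r) ↦ ?_
    simp only [abs_of_pos hr]
  have houtside (u : Fin n → ℝ) (hu : u ∉ {u | (∀ j, 0 ≤ u j) ∧ ∑ j, u j ≤ 1}) :
      ∫ r in Set.Ioi (0 : ℝ), r ^ n • G (r • fillMap (n + 1) u) = 0 := by
    obtain ⟨j, hj⟩ : ∃ j, fillMap (n + 1) u j < 0 := by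
      rw [Set.mem_ofPred_eq, ← fillMap_nonneg_iff] at hu
      simpa only [not_forall, not_le] using hu
    refine setIntegral_eq_zero_of_forall_eq_zero fun r (hr : 0 < r) ↦ ?_
    rw [hpos _ j (mul_nonpos_of_nonneg_of_nonpos hr.le hj.le), smul_zero]
  rw [integral_eq_integral_smul_fillMap hG, integral_simplexMeasure]
  simp_rw [hradial]
  exact (setIntegral_eq_integral_of_forall_compl_eq_zero houtside).symm

end Polar

lemma invGenGammaPDF_mul {a b τ r x : ℝ} (hr : 0 < r) (hx : 0 < x) :
    invGenGammaPDF a b τ (r * x) = τ * (b ^ a / (Real.Gamma a * x ^ (τ * a + 1))) *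
      r ^ (-(τ * a) - 1) * Real.exp (-(b / x ^ τ * r ^ (-τ))) := by
  have hxpow : x ^ (-(τ * a) - 1) = (x ^ (τ * a + 1))⁻¹ := by
    rw [← Real.rpow_neg hx.le, neg_add']
  rw [invGenGammaPDF_of_pos (mul_pos hr hx), Real.mul_rpow hr.le hx.le, Real.mul_rpow hr.le hx.le,
    hxpow, Real.rpow_neg hx.le τ]
  ring_nf

lemma prod_invGenGammaPDF_smul {ι : Type*} [Fintype ι] {τ r : ℝ} {α β x : ι → ℝ} (hr : 0 < r)
    (hx : ∀ j, 0 < x j) :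
    ∏ j, invGenGammaPDF (α j) (β j) τ ((r • x) j) =
      τ ^ Fintype.card ι * (∏ j, β j ^ α j / (Real.Gamma (α j) * x j ^ (τ * α j + 1))) *
        r ^ (-(τ * ∑ j, α j) - Fintype.card ι) *
        Real.exp (-((∑ j, β j / x j ^ τ) * r ^ (-τ))) := by
  simp_rw [Pi.smul_apply, smul_eq_mul, invGenGammaPDF_mul hr (hx _)]
  simp only [prod_mul_distrib, prod_const, card_univ, ← Real.exp_sum, ← Real.rpow_sum_of_pos hr,
    sum_sub_distrib, sum_neg_distrib, ← mul_sum, ← sum_mul, sum_const, nsmul_eq_mul, mul_one]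

lemma prod_invGenGammaPDF_eq_zero {ι : Type*} [Fintype ι] {τ : ℝ} {α β z : ι → ℝ} {j : ι}
    (hj : z j ≤ 0) : ∏ j, invGenGammaPDF (α j) (β j) τ (z j) = 0 :=
  prod_eq_zero (mem_univ j) (invGenGammaPDF_of_nonpos hj)

lemma sum_div_rpow_pos {ι : Type*} [Fintype ι] [Nonempty ι] {β x : ι → ℝ} (hβ : ∀ j, 0 < β j)
    (hx : ∀ j, 0 < x j) (τ : ℝ) : 0 < ∑ j, β j / x j ^ τ :=
  sum_pos (fun j _ ↦ div_pos (hβ j) (Real.rpow_pos_of_pos (hx j) τ)) univ_nonempty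

section InverseSchlomilch

variable {n : ℕ} {τ : ℝ} {α β x : Fin (n + 1) → ℝ}

lemma pow_mul_prod_invGenGammaPDF_smul (hα : ∀ j, 0 < α j) (hβ : ∀ j, 0 < β j)
    (hx : ∀ j, 0 < x j) {r : ℝ} (hr : 0 < r) :
    r ^ n * ∏ j, invGenGammaPDF (α j) (β j) τ ((r • x) j) =
      isDensity (n + 1) α β τ x * invGenGammaPDF (∑ j, α j) (∑ j, β j / x j ^ τ) τ r := by
  have hα_sum : 0 < ∑ j, α j := sum_pos (fun j _ ↦ hα j) univ_nonempty
  have hrate : 0 < ∑ j, β j / x j ^ τ := sum_div_rpow_pos hβ hx τ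
  have hGamma : Real.Gamma (∑ j, α j) ≠ 0 := (Real.Gamma_pos_of_pos hα_sum).ne'
  have hratepow : (∑ j, β j / x j ^ τ) ^ ∑ j, α j ≠ 0 := (Real.rpow_pos_of_pos hrate _).ne'
  have hrpow : r ^ (-(τ * ∑ j, α j) - 1) =
      r ^ n * r ^ (-(τ * ∑ j, α j) - ((n + 1 : ℕ) : ℝ)) := by
    rw [← Real.rpow_natCast, ← Real.rpow_add hr]
    push_cast
    ring_nf
  rw [prod_invGenGammaPDF_smul hr hx, invGenGammaPDF_of_pos hr, isDensity, Fintype.card_fin,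
    hrpow, Real.rpow_neg hrate.le, Nat.add_sub_cancel]
  generalize ∏ j, β j ^ α j / (Real.Gamma (α j) * x j ^ (τ * α j + 1)) = P
  field

lemma isDensity_eq_zero {K : ℕ} {α β x : Fin K → ℝ} {j : Fin K} (hj : τ * α j + 1 ≠ 0)
    (hx : x j = 0) : isDensity K α β τ x = 0 := by
  rw [isDensity, prod_eq_zero (mem_univ j), mul_zero]
  rw [hx, Real.zero_rpow hj, mul_zero, div_zero]

lemma integral_pow_mul_prod_invGenGammaPDF_smul (hτ : 0 < τ) (hα : ∀ j, 0 < α j)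
    (hβ : ∀ j, 0 < β j) (hx : ∀ j, 0 ≤ x j) :
    ∫ r in Set.Ioi (0 : ℝ), r ^ n * ∏ j, invGenGammaPDF (α j) (β j) τ ((r • x) j) =
      isDensity (n + 1) α β τ x := by
  by_cases hx' : ∀ j, 0 < x j
  · have hα_sum : 0 < ∑ j, α j := sum_pos (fun j _ ↦ hα j) univ_nonempty
    rw [setIntegral_congr_fun measurableSet_Ioi
        fun r hr ↦ pow_mul_prod_invGenGammaPDF_smul hα hβ hx' hr,
      integral_const_mul, setIntegral_eq_integral_of_forall_compl_eq_zero
        fun r hr ↦ invGenGammaPDF_of_nonpos (Set.notMem_Ioi.1 hr),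
      integral_invGenGammaPDF hα_sum (sum_div_rpow_pos hβ hx' τ) hτ, mul_one]
  · obtain ⟨j, hj⟩ : ∃ j, x j = 0 := by
      simp only [not_forall, not_lt] at hx'
      exact hx'.imp fun j hj ↦ le_antisymm hj (hx j)
    have hexp : τ * α j + 1 ≠ 0 := (add_pos (mul_pos hτ (hα j)) one_pos).ne'
    rw [isDensity_eq_zero hexp hj]
    refine setIntegral_eq_zero_of_forall_eq_zero fun r _ ↦ ?_
    have hsmul : (r • x) j ≤ 0 := by rw [Pi.smul_apply, hj, smul_zero]
    rw [prod_invGenGammaPDF_eq_zero hsmul, mul_zero]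

theorem integral_mul_isDensity_of_smul_invariant (hτ : 0 < τ) (hα : ∀ j, 0 < α j)
    (hβ : ∀ j, 0 < β j) {g : (Fin (n + 1) → ℝ) → ℝ}
    (hg : ∀ r : ℝ, 0 < r → ∀ z, g (r • z) = g z)
    (hint : Integrable fun z ↦ g z * ∏ j, invGenGammaPDF (α j) (β j) τ (z j)) :
    ∫ x, g x * isDensity (n + 1) α β τ x ∂simplexMeasure (n + 1) =
      ∫ z, g z * ∏ j, invGenGammaPDF (α j) (β j) τ (z j) := by
  have hvanish (z : Fin (n + 1) → ℝ) (j : Fin (n + 1)) (hj : z j ≤ 0) :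
      g z * ∏ j, invGenGammaPDF (α j) (β j) τ (z j) = 0 := by
    rw [prod_invGenGammaPDF_eq_zero hj, mul_zero]
  rw [integral_eq_integral_simplexMeasure hint hvanish]
  refine integral_congr_ae ?_
  filter_upwards [ae_simplexMeasure_nonneg n] with x hx
  rw [← integral_pow_mul_prod_invGenGammaPDF_smul hτ hα hβ hx, ← integral_const_mul]
  refine setIntegral_congr_fun measurableSet_Ioi fun r hr ↦ ?_
  simp only [hg r hr, smul_eq_mul]
  ring

end InverseSchlomilch

section LogMean

variable {K : ℕ} {τ : ℝ} {α β : Fin K → ℝ}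

lemma log_div_mul_prod_invGenGammaPDF (i k : Fin K) (z : Fin K → ℝ) :
    Real.log (z i / z k) * ∏ j, invGenGammaPDF (α j) (β j) τ (z j) =
      Real.log (z i) * ∏ j, invGenGammaPDF (α j) (β j) τ (z j) -
        Real.log (z k) * ∏ j, invGenGammaPDF (α j) (β j) τ (z j) := by
  by_cases hz : ∀ j, 0 < z j
  · rw [Real.log_div (hz i).ne' (hz k).ne', sub_mul]
  · obtain ⟨j, hj⟩ : ∃ j, z j ≤ 0 := by simpa only [not_forall, not_lt] using hz
    simp only [prod_invGenGammaPDF_eq_zero hj, mul_zero, sub_zero]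

lemma integrable_log_eval_mul_prod_invGenGammaPDF (hτ : 0 < τ) (hα : ∀ j, 0 < α j)
    (hβ : ∀ j, 0 < β j) (i : Fin K) :
    Integrable fun z : Fin K → ℝ ↦ Real.log (z i) * ∏ j, invGenGammaPDF (α j) (β j) τ (z j) :=
  integrable_comp_eval_mul_prod (fun j _ ↦ integrable_invGenGammaPDF (hα j) (hβ j) hτ)
    (integrable_log_mul_invGenGammaPDF (hα i) (hβ i) hτ)

lemma integral_log_eval_mul_prod_invGenGammaPDF (hτ : 0 < τ) (hα : ∀ j, 0 < α j)
    (hβ : ∀ j, 0 < β j) (i : Fin K) :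
    ∫ z : Fin K → ℝ, Real.log (z i) * ∏ j, invGenGammaPDF (α j) (β j) τ (z j) =
      1 / τ * (Real.log (β i) - digamma (α i)) :=
  (integral_comp_eval_mul_prod Real.log
    fun j _ ↦ integral_invGenGammaPDF (hα j) (hβ j) hτ).trans
    (integral_log_mul_invGenGammaPDF (hα i) (hβ i) hτ)

end LogMean

/-- Log-ratio means of the inverse Schlömilch distribution:
`E[log(X_i/X_k)] = (1/τ)[−ψ(α_i) + ψ(α_k) + log(β_i/β_k)]`. -/
theorem is_log_ratio_mean
    (K : ℕ) (hK : 2 ≤ K) (τ : ℝ) (hτ : 0 < τ)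
    (α β : Fin K → ℝ) (hα : ∀ i, 0 < α i) (hβ : ∀ i, 0 < β i) (i k : Fin K) :
    ∫ x, Real.log (x i / x k) * isDensity K α β τ x ∂(simplexMeasure K)
      = (1 / τ) * (-digamma (α i) + digamma (α k) + Real.log (β i / β k)) := by
  obtain ⟨n, rfl⟩ : ∃ n, K = n + 1 := ⟨K - 1, by omega⟩
  have hi := integrable_log_eval_mul_prod_invGenGammaPDF hτ hα hβ i
  have hk := integrable_log_eval_mul_prod_invGenGammaPDF hτ hα hβ k
  have hinvariant (r : ℝ) (hr : 0 < r) (z : Fin (n + 1) → ℝ) :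
      Real.log ((r • z) i / (r • z) k) = Real.log (z i / z k) := by
    simp only [Pi.smul_apply, smul_eq_mul, mul_div_mul_left _ _ hr.ne']
  rw [integral_mul_isDensity_of_smul_invariant hτ hα hβ
    (g := fun z ↦ Real.log (z i / z k)) hinvariant
    (by simpa only [log_div_mul_prod_invGenGammaPDF] using! hi.sub hk)]
  simp_rw [log_div_mul_prod_invGenGammaPDF]
  rw [integral_sub hi hk, integral_log_eval_mul_prod_invGenGammaPDF hτ hα hβ,
    integral_log_eval_mul_prod_invGenGammaPDF hτ hα hβ, Real.log_div (hβ i).ne' (hβ k).ne']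
  ring
end

section
/- Let K ≥ 2, τ > 0, and β ∈ ℝ^K with all β_i > 0, and let X have the Concrete distribution C(β, τ). Then for all indices i, k, the log-ratio mean satisfies E[log(X_i/X_k)] = (1/τ) log(β_i/β_k). -/
open MeasureTheory Finset

/-- The density of the Concrete distribution `C(β, τ)` on the simplex. -/
noncomputable def concreteDensity (K : ℕ) (β : Fin K → ℝ) (τ : ℝ) (x : Fin K → ℝ) : ℝ :=
  (Nat.factorial (K - 1) : ℝ) * τ ^ (K - 1) * (∑ j, β j / x j ^ τ) ^ (-(K : ℝ)) *
    ∏ i, β i / x i ^ (τ + 1)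

open ProbabilityTheory
open scoped ENNReal

/-!
If the `e j` are independent standard exponential variables, then the `(β j / e j) ^ (1 / τ)` are
independent Fréchet variables, and dividing them by their sum gives a vector with the Concrete
distribution `C(β, τ)`: in the coordinates `y = s • x`, with `x` in the simplex and `s > 0`,
Lebesgue measure on the orthant is `s ^ (K - 1) ds dx`, and the substitution
`r = (∑ j, β j / x j ^ τ) / s ^ τ` turns the integral of the Fréchet densities over `s` into the
Gamma integral `(K - 1)!`.

Hence `log (X_i / X_k)` has the law of `(1 / τ) * (log (β i / β k) + (log (e k) - log (e i)))`, in
which the random part has mean zero because `e i` and `e k` are identically distributed.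
-/

theorem lintegral_pi_prod {ι : Type*} [Fintype ι] {X : ι → Type*} [∀ i, MeasurableSpace (X i)]
    (μ : ∀ i, Measure (X i)) [∀ i, SigmaFinite (μ i)] {f : ∀ i, X i → ℝ≥0∞}
    (hf : ∀ i, Measurable (f i)) :
    ∫⁻ x, ∏ i, f i (x i) ∂Measure.pi μ = ∏ i, ∫⁻ t, f i t ∂μ i := by
  classical
  have marginal (s : Finset ι) (x : ∀ i, X i) :
      (∫⋯∫⁻_s, (fun x => ∏ i, f i (x i)) ∂μ) x =
        (∏ i ∈ s, ∫⁻ t, f i t ∂μ i) * ∏ i ∈ sᶜ, f i (x i) := by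
    induction s using Finset.induction_on generalizing x with
    | empty => simp
    | insert i s hi ih =>
      have hcompl : sᶜ = insert i (insert i s)ᶜ := by
        ext j
        by_cases h : j = i <;> simp [h, hi]
      have hprod (t : X i) : ∏ j ∈ sᶜ, f j (Function.update x i t j) =
          f i t * ∏ j ∈ (insert i s)ᶜ, f j (x j) := by
        rw [hcompl, Finset.prod_insert (by simp), Function.update_self]
        congr 1
        refine Finset.prod_congr rfl fun j hj => ?_
        rw [Function.update_of_ne (by rintro rfl; simp at hj)]
      rw [lmarginal_insert _ (by fun_prop) hi, Finset.prod_insert hi]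
      simp only [ih, hprod]
      rw [lintegral_const_mul _ ((hf i).mul_const _), lintegral_mul_const _ (hf i)]
      ring
  by_cases h : Nonempty (∀ i, X i)
  · obtain ⟨x⟩ := h
    rw [lintegral_eq_lmarginal_univ x, marginal]
    simp
  · rw [not_nonempty_iff] at h
    obtain ⟨i, hi⟩ := isEmpty_pi.1 h
    rw [lintegral_of_isEmpty, Finset.prod_eq_zero (Finset.mem_univ i) (lintegral_of_isEmpty _ _)]

theorem pi_withDensity {ι : Type*} [Fintype ι] {X : ι → Type*} [∀ i, MeasurableSpace (X i)]
    (μ : ∀ i, Measure (X i)) [∀ i, SigmaFinite (μ i)] {f : ∀ i, X i → ℝ≥0∞}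
    (hf : ∀ i, Measurable (f i)) [∀ i, SigmaFinite ((μ i).withDensity (f i))] :
    Measure.pi (fun i => (μ i).withDensity (f i)) =
      (Measure.pi μ).withDensity fun x => ∏ i, f i (x i) := by
  refine Measure.pi_eq fun s hs => ?_
  rw [withDensity_apply _ (.univ_pi hs), Measure.restrict_pi_pi, lintegral_pi_prod _ hf]
  exact Finset.prod_congr rfl fun i _ => (withDensity_apply _ (hs i)).symm

theorem expMeasure_eq_withDensity (r : ℝ) :
    expMeasure r = (volume.restrict (Set.Ioi 0)).withDensity
      fun x => ENNReal.ofReal (r * Real.exp (-(r * x))) := by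
  have hpdf : gammaPDF 1 r = (Set.Ici 0).indicator
      fun x => ENNReal.ofReal (r * Real.exp (-(r * x))) := by
    funext x
    by_cases hx : 0 ≤ x
    · rw [Set.indicator_of_mem (Set.mem_Ici.2 hx)]
      exact exponentialPDF_of_nonneg hx
    · rw [Set.indicator_of_notMem (Set.notMem_Ici.2 (not_le.1 hx)), gammaPDF_of_neg (not_le.1 hx)]
  rw [expMeasure, gammaMeasure, hpdf, withDensity_indicator measurableSet_Ici,
    Measure.restrict_congr_set Ioi_ae_eq_Ici]

theorem ae_pos_expMeasure (r : ℝ) : ∀ᵐ x ∂expMeasure r, 0 < x := by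
  rw [expMeasure_eq_withDensity]
  exact (withDensity_absolutelyContinuous _ _).ae_le (ae_restrict_mem measurableSet_Ioi)

theorem integrable_rpow_expMeasure {p r : ℝ} (hp : -1 < p) (hr : 0 < r) :
    Integrable (fun x => x ^ p) (expMeasure r) := by
  rw [expMeasure_eq_withDensity, integrable_withDensity_iff (by fun_prop) (by simp)]
  have h := (integrableOn_rpow_mul_exp_neg_mul_rpow hp one_pos hr).const_mul r
  refine h.congr (.of_forall fun x => ?_)
  dsimp only
  rw [ENNReal.toReal_ofReal (by positivity), Real.rpow_one, neg_mul]
  ring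

theorem integrable_log_expMeasure {r : ℝ} (hr : 0 < r) :
    Integrable Real.log (expMeasure r) := by
  have exp_mul_log (p : ℝ) (hp : -1 < p) :
      Integrable (fun x => Real.exp (p * Real.log x)) (expMeasure r) := by
    refine (integrable_rpow_expMeasure hp hr).congr ?_
    filter_upwards [ae_pos_expMeasure r] with x hx
    rw [Real.rpow_def_of_pos hx, mul_comm]
  simpa using integrable_pow_of_integrable_exp_mul (X := Real.log) (t := 1 / 2) (by norm_num)
    (exp_mul_log _ (by norm_num)) (exp_mul_log _ (by norm_num)) 1

theorem lintegral_Ioi_pow_mul_exp_neg (n : ℕ) :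
    ∫⁻ x in Set.Ioi (0 : ℝ), ENNReal.ofReal (x ^ n * Real.exp (-x)) = n.factorial := by
  have h := Real.GammaIntegral_convergent (s := n + 1) (by positivity)
  have hΓ := Real.Gamma_eq_integral (s := n + 1) (by positivity)
  simp only [add_sub_cancel_right, Real.rpow_natCast, Real.Gamma_nat_eq_factorial,
    mul_comm (Real.exp _)] at h hΓ
  rw [← ofReal_integral_eq_lintegral_ofReal h, ← hΓ, ENNReal.ofReal_natCast]
  filter_upwards [ae_restrict_mem measurableSet_Ioi] with x hx
  have := Set.mem_Ioi.1 hx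
  positivity

theorem lintegral_Ioi_eq_lintegral_comp_div_rpow {b τ : ℝ} (hb : 0 < b) (hτ : 0 < τ)
    (g : ℝ → ℝ≥0∞) :
    ∫⁻ x in Set.Ioi 0, g x =
      ∫⁻ t in Set.Ioi 0, ENNReal.ofReal (b * τ / t ^ (τ + 1)) * g (b / t ^ τ) := by
  have hderiv : ∀ t ∈ Set.Ioi (0 : ℝ),
      HasDerivWithinAt (fun t => b / t ^ τ) (-(b * τ / t ^ (τ + 1))) (Set.Ioi 0) t := by
    intro t ht
    have ht : 0 < t := ht
    have h := (((Real.hasDerivAt_rpow_const (p := τ) (.inl ht.ne')).fun_inv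
      (Real.rpow_pos_of_pos ht τ).ne').const_mul b).hasDerivWithinAt (s := Set.Ioi 0)
    refine h.congr_deriv ?_
    rw [Real.rpow_sub_one ht.ne', Real.rpow_add_one ht.ne']
    field_simp
  have hinv : Set.LeftInvOn (fun x => (b / x) ^ (1 / τ)) (fun t => b / t ^ τ) (Set.Ioi 0) := by
    intro t ht
    simp [div_div_cancel₀ hb.ne', Real.rpow_rpow_inv (le_of_lt ht) hτ.ne']
  have himage : (fun t => b / t ^ τ) '' Set.Ioi 0 = Set.Ioi 0 := by
    refine Set.Subset.antisymm (Set.image_subset_iff.2 fun t ht => ?_) fun x hx => ?_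
    · exact div_pos hb (Real.rpow_pos_of_pos ht τ)
    · have hx : 0 < x := hx
      refine ⟨(b / x) ^ (1 / τ), Real.rpow_pos_of_pos (div_pos hb hx) _, ?_⟩
      simp [Real.rpow_inv_rpow (div_pos hb hx).le hτ.ne', div_div_cancel₀ hb.ne']
  rw [← himage, lintegral_image_eq_lintegral_abs_deriv_mul measurableSet_Ioi hderiv hinv.injOn,
    himage]
  refine setLIntegral_congr_fun measurableSet_Ioi fun t ht => ?_
  have ht : 0 < t := ht
  simp only [abs_neg]
  rw [abs_of_pos (by positivity)]

/-- Density of the Fréchet distribution with shape `τ` and scale `b ^ (1 / τ)`. -/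
noncomputable def frechetDensity (b τ t : ℝ) : ℝ :=
  b * τ / t ^ (τ + 1) * Real.exp (-(b / t ^ τ))

/-- The Fréchet distribution with density `frechetDensity b τ` on the positive half-line. -/
noncomputable def frechetMeasure (b τ : ℝ) : Measure ℝ :=
  (volume.restrict (Set.Ioi 0)).withDensity fun t => ENNReal.ofReal (frechetDensity b τ t)

@[fun_prop]
theorem measurable_frechetDensity (b τ : ℝ) : Measurable (frechetDensity b τ) := by
  unfold frechetDensity
  fun_prop

theorem frechetDensity_nonneg {b τ t : ℝ} (hb : 0 ≤ b) (hτ : 0 ≤ τ) (ht : 0 ≤ t) :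
    0 ≤ frechetDensity b τ t := by
  unfold frechetDensity
  positivity

theorem frechetDensity_zero (b : ℝ) {τ : ℝ} (hτ : 0 < τ) : frechetDensity b τ 0 = 0 := by
  simp [frechetDensity, Real.zero_rpow (by positivity : τ + 1 ≠ 0)]

instance instSigmaFiniteFrechetMeasure (b τ : ℝ) : SigmaFinite (frechetMeasure b τ) := by
  unfold frechetMeasure
  infer_instance

theorem map_expMeasure_eq_frechetMeasure {b τ : ℝ} (hb : 0 < b) (hτ : 0 < τ) :
    (expMeasure 1).map (fun x => (b / x) ^ (1 / τ)) = frechetMeasure b τ := by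
  refine Measure.ext_of_lintegral _ fun F hF => ?_
  rw [lintegral_map hF (by fun_prop), expMeasure_eq_withDensity, frechetMeasure,
    lintegral_withDensity_eq_lintegral_mul _ (by fun_prop) (by fun_prop),
    lintegral_withDensity_eq_lintegral_mul _ (by fun_prop) hF,
    lintegral_Ioi_eq_lintegral_comp_div_rpow hb hτ]
  refine setLIntegral_congr_fun measurableSet_Ioi fun t ht => ?_
  have ht : 0 < t := ht
  have hinv : (b / (b / t ^ τ)) ^ (1 / τ) = t := by
    rw [div_div_cancel₀ hb.ne', one_div, Real.rpow_rpow_inv ht.le hτ.ne']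
  simp only [Pi.mul_apply, hinv, one_mul]
  rw [← mul_assoc, ← ENNReal.ofReal_mul (by positivity), frechetDensity]

/-- The point of the hyperplane `∑ j, y j = s` whose first `n` coordinates are `v`. -/
def hyperplanePoint {n : ℕ} (s : ℝ) (v : Fin n → ℝ) : Fin (n + 1) → ℝ :=
  Fin.snoc v (s - ∑ j, v j)

section Hyperplane

variable {n : ℕ}

@[fun_prop]
theorem measurable_hyperplanePoint :
    Measurable fun p : ℝ × (Fin n → ℝ) => hyperplanePoint p.1 p.2 := by
  refine measurable_pi_iff.2 fun i => ?_
  induction i using Fin.lastCases <;> simp only [hyperplanePoint, Fin.snoc_last, Fin.snoc_castSucc]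
    <;> fun_prop

theorem sum_hyperplanePoint (s : ℝ) (v : Fin n → ℝ) : ∑ i, hyperplanePoint s v i = s := by
  simp [hyperplanePoint, Fin.sum_univ_castSucc]

theorem hyperplanePoint_nonneg_iff {s : ℝ} {v : Fin n → ℝ} :
    0 ≤ hyperplanePoint s v ↔ (∀ j, 0 ≤ v j) ∧ ∑ j, v j ≤ s := by
  simp [Pi.le_def, hyperplanePoint, Fin.forall_fin_succ']

theorem smul_hyperplanePoint (c s : ℝ) (v : Fin n → ℝ) :
    c • hyperplanePoint s v = hyperplanePoint (c * s) (c • v) := by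
  ext i
  induction i using Fin.lastCases <;> simp [hyperplanePoint, mul_sub, Finset.mul_sum]

theorem lintegral_eq_lintegral_hyperplanePoint {F : (Fin (n + 1) → ℝ) → ℝ≥0∞}
    (hF : Measurable F) : ∫⁻ y, F y = ∫⁻ s, ∫⁻ v : Fin n → ℝ, F (hyperplanePoint s v) := by
  have hsnoc := (volume_preserving_piFinSuccAbove (fun _ : Fin (n + 1) => ℝ) (Fin.last n)).symm
  calc ∫⁻ y, F y
      = ∫⁻ v : Fin n → ℝ, ∫⁻ t : ℝ, F (Fin.snoc v t) := by
        rw [← hsnoc.lintegral_comp hF, Measure.volume_eq_prod]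
        refine (lintegral_prod_symm _ (hF.comp hsnoc.measurable).aemeasurable).trans ?_
        simp [MeasurableEquiv.piFinSuccAbove, Fin.snocEquiv]
    _ = ∫⁻ v : Fin n → ℝ, ∫⁻ s : ℝ, F (hyperplanePoint s v) :=
        lintegral_congr fun v =>
          (lintegral_sub_right_eq_self (fun t => F (Fin.snoc v t)) (∑ j, v j)).symm
    _ = ∫⁻ s, ∫⁻ v : Fin n → ℝ, F (hyperplanePoint s v) :=
        lintegral_lintegral_swap
          (hF.comp (measurable_hyperplanePoint.comp measurable_swap)).aemeasurable

end Hyperplane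

theorem lintegral_eq_ofReal_mul_lintegral_comp_smul {E : Type*} [NormedAddCommGroup E]
    [NormedSpace ℝ E] [FiniteDimensional ℝ E] [MeasurableSpace E] [BorelSpace E] (μ : Measure E)
    [μ.IsAddHaarMeasure] {c : ℝ} (hc : 0 < c) {f : E → ℝ≥0∞} (hf : Measurable f) :
    ∫⁻ x, f x ∂μ = ENNReal.ofReal (c ^ Module.finrank ℝ E) * ∫⁻ x, f (c • x) ∂μ := by
  rw [← lintegral_map hf (measurable_const_smul c), Measure.map_addHaar_smul μ hc.ne',
    lintegral_smul_measure, smul_eq_mul, ← mul_assoc, ← ENNReal.ofReal_mul (by positivity),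
    abs_of_pos (by positivity), mul_inv_cancel₀ (by positivity), ENNReal.ofReal_one, one_mul]

section Simplex

variable {n : ℕ}

theorem fillMap_succ (u : Fin n → ℝ) : fillMap (n + 1) u = hyperplanePoint 1 u := by
  ext i
  induction i using Fin.lastCases <;> simp [fillMap, hyperplanePoint]

theorem measurable_fillMap_succ : Measurable (fillMap (n + 1)) := by
  have h : fillMap (n + 1) = fun u : Fin n → ℝ => hyperplanePoint 1 u := funext fillMap_succ
  rw [h]
  fun_prop

theorem measurableSet_simplexCoords :
    MeasurableSet {u : Fin n → ℝ | (∀ j, 0 ≤ u j) ∧ ∑ j, u j ≤ 1} := by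
  measurability

instance instSFiniteSimplexMeasure (K : ℕ) : SFinite (simplexMeasure K) := by
  unfold simplexMeasure
  infer_instance

theorem ae_simplexMeasure_succ_mem_stdSimplex :
    ∀ᵐ x ∂simplexMeasure (n + 1), x ∈ stdSimplex ℝ (Fin (n + 1)) := by
  refine (ae_map_iff measurable_fillMap_succ.aemeasurable
    (isClosed_stdSimplex ℝ _).measurableSet).2 ?_
  filter_upwards [ae_restrict_mem measurableSet_simplexCoords] with u hu
  rw [fillMap_succ]
  exact ⟨hyperplanePoint_nonneg_iff.2 hu, sum_hyperplanePoint 1 u⟩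

theorem lintegral_simplexMeasure_succ {F : (Fin (n + 1) → ℝ) → ℝ≥0∞} (hF : Measurable F) :
    ∫⁻ x, F x ∂simplexMeasure (n + 1) =
      ∫⁻ u : Fin n → ℝ, (Set.Ici 0).indicator F (hyperplanePoint 1 u) := by
  classical
  rw [simplexMeasure, lintegral_map hF measurable_fillMap_succ]
  refine (lintegral_indicator measurableSet_simplexCoords _).symm.trans ?_
  refine lintegral_congr fun u => ?_
  simp only [Set.indicator_apply, Set.mem_Ici, Set.mem_ofPred_eq,
    hyperplanePoint_nonneg_iff, fillMap_succ]
  rfl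

theorem lintegral_indicator_Ici_hyperplanePoint_of_neg (F : (Fin (n + 1) → ℝ) → ℝ≥0∞) {s : ℝ}
    (hs : s < 0) : ∫⁻ v : Fin n → ℝ, (Set.Ici 0).indicator F (hyperplanePoint s v) = 0 := by
  rw [← lintegral_zero]
  refine lintegral_congr fun v => Set.indicator_of_notMem (fun hv => hs.not_ge ?_) F
  rw [← sum_hyperplanePoint s v]
  exact Finset.sum_nonneg fun i _ => hv i

theorem lintegral_indicator_Ici_hyperplanePoint_of_pos {F : (Fin (n + 1) → ℝ) → ℝ≥0∞}
    (hF : Measurable F) {s : ℝ} (hs : 0 < s) :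
    ∫⁻ v : Fin n → ℝ, (Set.Ici 0).indicator F (hyperplanePoint s v) =
      ∫⁻ x, ENNReal.ofReal (s ^ n) * F (s • x) ∂simplexMeasure (n + 1) := by
  classical
  have hG : Measurable ((Set.Ici 0).indicator F) := hF.indicator measurableSet_Ici
  have hsmul (u : Fin n → ℝ) : hyperplanePoint s (s • u) = s • hyperplanePoint 1 u := by
    rw [smul_hyperplanePoint, mul_one]
  rw [lintegral_const_mul _ (by fun_prop), lintegral_simplexMeasure_succ (by fun_prop),
    lintegral_eq_ofReal_mul_lintegral_comp_smul volume hs (by fun_prop), Module.finrank_fin_fun]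
  simp only [hsmul, Set.indicator_apply, Set.mem_Ici, smul_nonneg_iff_nonneg_of_pos_left hs]

theorem setLIntegral_Ici_eq_lintegral_simplexMeasure {F : (Fin (n + 1) → ℝ) → ℝ≥0∞}
    (hF : Measurable F) :
    ∫⁻ y in Set.Ici 0, F y = ∫⁻ x, (∫⁻ s : ℝ in Set.Ioi 0, ENNReal.ofReal (s ^ n) * F (s • x))
      ∂simplexMeasure (n + 1) :=
  calc ∫⁻ y in Set.Ici 0, F y
      = ∫⁻ s, ∫⁻ v : Fin n → ℝ, (Set.Ici 0).indicator F (hyperplanePoint s v) := by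
        rw [← lintegral_indicator measurableSet_Ici,
          lintegral_eq_lintegral_hyperplanePoint (hF.indicator measurableSet_Ici)]
    _ = ∫⁻ s in Set.Ioi 0, ∫⁻ v : Fin n → ℝ, (Set.Ici 0).indicator F (hyperplanePoint s v) := by
        rw [Measure.restrict_congr_set Ioi_ae_eq_Ici]
        refine (setLIntegral_eq_of_support_subset fun s hs => ?_).symm
        exact not_lt.1 fun hneg => hs (lintegral_indicator_Ici_hyperplanePoint_of_neg F hneg)
    _ = ∫⁻ s : ℝ in Set.Ioi 0,
          ∫⁻ x, ENNReal.ofReal (s ^ n) * F (s • x) ∂simplexMeasure (n + 1) :=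
        setLIntegral_congr_fun measurableSet_Ioi fun _ hs =>
          lintegral_indicator_Ici_hyperplanePoint_of_pos hF hs
    _ = ∫⁻ x, (∫⁻ s : ℝ in Set.Ioi 0, ENNReal.ofReal (s ^ n) * F (s • x))
          ∂simplexMeasure (n + 1) :=
        lintegral_lintegral_swap (by unfold Function.uncurry; fun_prop)

end Simplex

theorem pi_frechetMeasure {ι : Type*} [Fintype ι] (β : ι → ℝ) (τ : ℝ) :
    Measure.pi (fun j => frechetMeasure (β j) τ) =
      (volume.restrict (Set.Ici 0)).withDensity
        fun y => ∏ j, ENNReal.ofReal (frechetDensity (β j) τ (y j)) := by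
  have (j : ι) : SigmaFinite ((volume.restrict (Set.Ioi 0)).withDensity
      fun t => ENNReal.ofReal (frechetDensity (β j) τ t)) :=
    instSigmaFiniteFrechetMeasure (β j) τ
  unfold frechetMeasure
  rw [pi_withDensity _ (fun j => by fun_prop), volume_pi, ← Set.pi_univ_Ici, Measure.restrict_pi_pi]
  simp only [Pi.zero_apply, Measure.restrict_congr_set Ioi_ae_eq_Ici]

/-- The Concrete distribution `C(β, τ)` as a measure on `ℝ^K`. For nonnegative `β` and `τ` its
density is nonnegative on the simplex, so `ENNReal.ofReal` truncates nothing there. -/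
noncomputable def concreteMeasure (K : ℕ) (β : Fin K → ℝ) (τ : ℝ) : Measure (Fin K → ℝ) :=
  (simplexMeasure K).withDensity fun x => ENNReal.ofReal (concreteDensity K β τ x)

@[fun_prop]
theorem measurable_concreteDensity (K : ℕ) (β : Fin K → ℝ) (τ : ℝ) :
    Measurable (concreteDensity K β τ) := by
  unfold concreteDensity
  fun_prop

section ConcreteDensity

variable {K : ℕ} {β : Fin K → ℝ} {τ : ℝ}

theorem concreteDensity_nonneg (hβ : ∀ j, 0 ≤ β j) (hτ : 0 ≤ τ) {x : Fin K → ℝ} (hx : 0 ≤ x) :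
    0 ≤ concreteDensity K β τ x := by
  have hsum : 0 ≤ ∑ j, β j / x j ^ τ :=
    Finset.sum_nonneg fun j _ => div_nonneg (hβ j) (Real.rpow_nonneg (hx j) _)
  have hprod : 0 ≤ ∏ j, β j / x j ^ (τ + 1) :=
    Finset.prod_nonneg fun j _ => div_nonneg (hβ j) (Real.rpow_nonneg (hx j) _)
  unfold concreteDensity
  positivity

theorem concreteDensity_eq_zero_of_apply_eq_zero (hτ : 0 < τ) {x : Fin K → ℝ} {j : Fin K}
    (hxj : x j = 0) : concreteDensity K β τ x = 0 := by
  have hprod : ∏ i, β i / x i ^ (τ + 1) = 0 := Finset.prod_eq_zero (Finset.mem_univ j) <| by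
    rw [hxj, Real.zero_rpow (by positivity), div_zero]
  rw [concreteDensity, hprod, mul_zero]

end ConcreteDensity

section NormalizeSum

variable {ι : Type*} [Fintype ι]

/-- The vector `y` divided by the sum of its coordinates, and `0` if that sum vanishes. -/
noncomputable def normalizeSum (y : ι → ℝ) : ι → ℝ :=
  (∑ j, y j)⁻¹ • y

@[fun_prop]
theorem measurable_normalizeSum : Measurable (normalizeSum : (ι → ℝ) → ι → ℝ) := by
  unfold normalizeSum
  fun_prop

theorem normalizeSum_smul_of_mem_stdSimplex {x : ι → ℝ} (hx : x ∈ stdSimplex ℝ ι)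
    {s : ℝ} (hs : s ≠ 0) : normalizeSum (s • x) = x := by
  simp only [normalizeSum, Pi.smul_apply, smul_eq_mul, ← Finset.mul_sum, hx.2, mul_one,
    inv_smul_smul₀ hs]

theorem normalizeSum_div_normalizeSum {y : ι → ℝ} (hy : ∑ j, y j ≠ 0) (i k : ι) :
    normalizeSum y i / normalizeSum y k = y i / y k :=
  mul_div_mul_left _ _ (inv_ne_zero hy)

theorem log_normalizeSum_div_normalizeSum {β e : ι → ℝ} (hβ : ∀ j, 0 < β j) (he : ∀ j, 0 < e j)
    (p : ℝ) (i k : ι) :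
    Real.log (normalizeSum (fun j => (β j / e j) ^ p) i /
        normalizeSum (fun j => (β j / e j) ^ p) k) =
      p * (Real.log (β i / β k) + (Real.log (e k) - Real.log (e i))) := by
  have hpos (j : ι) : 0 < β j / e j := div_pos (hβ j) (he j)
  have hsum : 0 < ∑ j, (β j / e j) ^ p :=
    Finset.sum_pos (fun j _ => Real.rpow_pos_of_pos (hpos j) p) ⟨i, Finset.mem_univ i⟩
  rw [normalizeSum_div_normalizeSum hsum.ne', ← Real.div_rpow (hpos i).le (hpos k).le,
    Real.log_rpow (div_pos (hpos i) (hpos k)), Real.log_div (hpos i).ne' (hpos k).ne',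
    Real.log_div (hβ i).ne' (he i).ne', Real.log_div (hβ k).ne' (he k).ne',
    Real.log_div (hβ i).ne' (hβ k).ne']
  ring

end NormalizeSum

section ConcreteMeasure

variable {n : ℕ} {β : Fin (n + 1) → ℝ} {τ : ℝ}

theorem integral_concreteMeasure (hβ : ∀ j, 0 ≤ β j) (hτ : 0 ≤ τ) (φ : (Fin (n + 1) → ℝ) → ℝ) :
    ∫ x, φ x ∂concreteMeasure (n + 1) β τ =
      ∫ x, φ x * concreteDensity (n + 1) β τ x ∂simplexMeasure (n + 1) := by
  rw [concreteMeasure, integral_withDensity_eq_integral_toReal_smul (by fun_prop) (by simp)]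
  refine integral_congr_ae ?_
  filter_upwards [ae_simplexMeasure_succ_mem_stdSimplex] with x hx
  rw [ENNReal.toReal_ofReal (concreteDensity_nonneg hβ hτ hx.1), smul_eq_mul, mul_comm]

theorem pow_mul_prod_frechetDensity_smul (hβ : ∀ j, 0 < β j) {x : Fin (n + 1) → ℝ}
    (hx : ∀ j, 0 < x j) {s : ℝ} (hs : 0 < s) :
    s ^ n * ∏ j, frechetDensity (β j) τ (s * x j) =
      (∑ j, β j / x j ^ τ) * τ / s ^ (τ + 1) *
        (concreteDensity (n + 1) β τ x / n.factorial *
          (((∑ j, β j / x j ^ τ) / s ^ τ) ^ n * Real.exp (-((∑ j, β j / x j ^ τ) / s ^ τ)))) := by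
  set A := ∑ j, β j / x j ^ τ with hA_def
  have hA : 0 < A := Finset.sum_pos (fun j _ => div_pos (hβ j) (Real.rpow_pos_of_pos (hx j) _))
    Finset.univ_nonempty
  have hfactor (j : Fin (n + 1)) : frechetDensity (β j) τ (s * x j) =
      τ / s ^ (τ + 1) * (β j / x j ^ (τ + 1)) * Real.exp (-(β j / x j ^ τ / s ^ τ)) := by
    rw [frechetDensity, Real.mul_rpow hs.le (hx j).le, Real.mul_rpow hs.le (hx j).le]
    congr 1
    · ring
    · congr 2
      ring
  have hprod : ∏ j, frechetDensity (β j) τ (s * x j) =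
      (τ / s ^ (τ + 1)) ^ (n + 1) * (∏ j, β j / x j ^ (τ + 1)) * Real.exp (-(A / s ^ τ)) := by
    simp only [hfactor, Finset.prod_mul_distrib, ← Real.exp_sum, Finset.sum_neg_distrib,
      ← Finset.sum_div, Finset.prod_const, Finset.card_univ, Fintype.card_fin, hA_def]
  have hAneg : A ^ (-((n + 1 : ℕ) : ℝ)) = (A ^ (n + 1))⁻¹ := by
    rw [Real.rpow_neg hA.le, Real.rpow_natCast]
  rw [hprod, concreteDensity, ← hA_def, hAneg, Real.rpow_add_one hs.ne', Nat.add_sub_cancel,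
    div_pow, div_pow]
  have := Real.rpow_pos_of_pos hs τ
  field_simp
  ring

theorem lintegral_pow_mul_prod_frechetDensity_smul_of_pos (hβ : ∀ j, 0 < β j) (hτ : 0 < τ)
    {x : Fin (n + 1) → ℝ} (hx : ∀ j, 0 < x j) :
    ∫⁻ s : ℝ in Set.Ioi 0, ENNReal.ofReal (s ^ n) *
        ∏ j, ENNReal.ofReal (frechetDensity (β j) τ (s * x j)) =
      ENNReal.ofReal (concreteDensity (n + 1) β τ x) := by
  set A := ∑ j, β j / x j ^ τ
  have hA : 0 < A := Finset.sum_pos (fun j _ => div_pos (hβ j) (Real.rpow_pos_of_pos (hx j) _))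
    Finset.univ_nonempty
  set C := concreteDensity (n + 1) β τ x
  have hC : 0 ≤ C := concreteDensity_nonneg (fun j => (hβ j).le) hτ.le fun j => (hx j).le
  calc ∫⁻ s : ℝ in Set.Ioi 0, ENNReal.ofReal (s ^ n) *
        ∏ j, ENNReal.ofReal (frechetDensity (β j) τ (s * x j))
      = ∫⁻ s : ℝ in Set.Ioi 0, ENNReal.ofReal (A * τ / s ^ (τ + 1)) *
          (ENNReal.ofReal (C / n.factorial) *
            ENNReal.ofReal ((A / s ^ τ) ^ n * Real.exp (-(A / s ^ τ)))) := by
        refine setLIntegral_congr_fun measurableSet_Ioi fun s hs => ?_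
        have hs : 0 < s := hs
        rw [← ENNReal.ofReal_prod_of_nonneg fun j _ => ?_, ← ENNReal.ofReal_mul (by positivity),
          pow_mul_prod_frechetDensity_smul hβ hx hs, ENNReal.ofReal_mul (by positivity),
          ENNReal.ofReal_mul (by positivity)]
        exact frechetDensity_nonneg (hβ j).le hτ.le (mul_pos hs (hx j)).le
    _ = ENNReal.ofReal (C / n.factorial) *
          ∫⁻ r : ℝ in Set.Ioi 0, ENNReal.ofReal (r ^ n * Real.exp (-r)) := by
        rw [← lintegral_const_mul _ (by fun_prop)]
        exact (lintegral_Ioi_eq_lintegral_comp_div_rpow hA hτ fun r =>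
          ENNReal.ofReal (C / n.factorial) * ENNReal.ofReal (r ^ n * Real.exp (-r))).symm
    _ = ENNReal.ofReal C := by
        rw [lintegral_Ioi_pow_mul_exp_neg, ← ENNReal.ofReal_natCast,
          ← ENNReal.ofReal_mul (by positivity), div_mul_cancel₀ _ (by positivity)]

theorem lintegral_pow_mul_prod_frechetDensity_smul (hβ : ∀ j, 0 < β j) (hτ : 0 < τ)
    {x : Fin (n + 1) → ℝ} (hx : 0 ≤ x) :
    ∫⁻ s : ℝ in Set.Ioi 0, ENNReal.ofReal (s ^ n) *
        ∏ j, ENNReal.ofReal (frechetDensity (β j) τ (s * x j)) =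
      ENNReal.ofReal (concreteDensity (n + 1) β τ x) := by
  by_cases hpos : ∀ j, 0 < x j
  · exact lintegral_pow_mul_prod_frechetDensity_smul_of_pos hβ hτ hpos
  · -- A vanishing coordinate makes both densities vanish, because `b / 0 = 0`.
    push Not at hpos
    obtain ⟨j, hj⟩ := hpos
    have hxj : x j = 0 := le_antisymm hj (hx j)
    have hprod (s : ℝ) : ∏ j, ENNReal.ofReal (frechetDensity (β j) τ (s * x j)) = 0 :=
      Finset.prod_eq_zero (Finset.mem_univ j) <| by
        rw [hxj, mul_zero, frechetDensity_zero _ hτ, ENNReal.ofReal_zero]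
    simp only [hprod, mul_zero, lintegral_zero, ENNReal.ofReal_zero,
      concreteDensity_eq_zero_of_apply_eq_zero hτ hxj]

theorem map_normalizeSum_pi_frechetMeasure (hβ : ∀ j, 0 < β j) (hτ : 0 < τ) :
    (Measure.pi fun j => frechetMeasure (β j) τ).map normalizeSum =
      concreteMeasure (n + 1) β τ := by
  refine Measure.ext_of_lintegral _ fun F hF => ?_
  rw [lintegral_map hF measurable_normalizeSum, pi_frechetMeasure,
    lintegral_withDensity_eq_lintegral_mul _ (by fun_prop) (by fun_prop),
    setLIntegral_Ici_eq_lintegral_simplexMeasure (by fun_prop), concreteMeasure,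
    lintegral_withDensity_eq_lintegral_mul _ (by fun_prop) hF]
  refine lintegral_congr_ae ?_
  filter_upwards [ae_simplexMeasure_succ_mem_stdSimplex] with x hx
  rw [Pi.mul_apply, ← lintegral_pow_mul_prod_frechetDensity_smul hβ hτ hx.1,
    ← lintegral_mul_const _ (by fun_prop)]
  refine setLIntegral_congr_fun measurableSet_Ioi fun s hs => ?_
  have hs : 0 < s := hs
  simp only [Pi.mul_apply, Pi.smul_apply, smul_eq_mul,
    normalizeSum_smul_of_mem_stdSimplex hx hs.ne', mul_assoc]

theorem concreteMeasure_eq_map_pi_expMeasure (hβ : ∀ j, 0 < β j) (hτ : 0 < τ) :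
    concreteMeasure (n + 1) β τ =
      (Measure.pi fun _ => expMeasure 1).map
        fun e => normalizeSum fun j => (β j / e j) ^ (1 / τ) := by
  have := isProbabilityMeasure_expMeasure one_pos
  have (j : Fin (n + 1)) : SigmaFinite ((expMeasure 1).map fun x => (β j / x) ^ (1 / τ)) := by
    rw [map_expMeasure_eq_frechetMeasure (hβ j) hτ]
    infer_instance
  rw [← map_normalizeSum_pi_frechetMeasure hβ hτ]
  simp only [← map_expMeasure_eq_frechetMeasure (hβ _) hτ]
  rw [← Measure.pi_map_pi (fun j => by fun_prop), Measure.map_map (by fun_prop) (by fun_prop)]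
  rfl

end ConcreteMeasure

section ExpProduct

variable {ι : Type*} [Fintype ι] {r : ℝ}

theorem integrable_log_comp_eval_pi_expMeasure (hr : 0 < r) (i : ι) :
    Integrable (fun e : ι → ℝ => Real.log (e i)) (Measure.pi fun _ => expMeasure r) := by
  have := isProbabilityMeasure_expMeasure hr
  exact integrable_comp_eval (integrable_log_expMeasure hr)

theorem integrable_log_sub_log_pi_expMeasure (hr : 0 < r) (i k : ι) :
    Integrable (fun e : ι → ℝ => Real.log (e k) - Real.log (e i))
      (Measure.pi fun _ => expMeasure r) :=
  (integrable_log_comp_eval_pi_expMeasure hr k).sub (integrable_log_comp_eval_pi_expMeasure hr i)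

theorem integral_log_sub_log_pi_expMeasure (hr : 0 < r) (i k : ι) :
    ∫ e : ι → ℝ, (Real.log (e k) - Real.log (e i)) ∂(Measure.pi fun _ => expMeasure r) = 0 := by
  have := isProbabilityMeasure_expMeasure hr
  have hmarginal (j : ι) : ∫ e : ι → ℝ, Real.log (e j) ∂(Measure.pi fun _ => expMeasure r) =
      ∫ t, Real.log t ∂expMeasure r :=
    integral_comp_eval (integrable_log_expMeasure hr).aestronglyMeasurable
  rw [integral_sub (integrable_log_comp_eval_pi_expMeasure hr k)
    (integrable_log_comp_eval_pi_expMeasure hr i), hmarginal, hmarginal, sub_self]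

theorem ae_forall_pos_pi_expMeasure (hr : 0 < r) :
    ∀ᵐ e : ι → ℝ ∂Measure.pi (fun _ => expMeasure r), ∀ j, 0 < e j := by
  have := isProbabilityMeasure_expMeasure hr
  exact ae_all_iff.2 fun j =>
    (measurePreserving_eval (fun _ : ι => expMeasure r) j).quasiMeasurePreserving.ae
      (ae_pos_expMeasure r)

end ExpProduct

/-- Log-ratio means of the Concrete distribution:
`E[log(X_i/X_k)] = (1/τ) log(β_i/β_k)`. -/
theorem concrete_log_ratio_mean
    (K : ℕ) (hK : 2 ≤ K) (τ : ℝ) (hτ : 0 < τ)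
    (β : Fin K → ℝ) (hβ : ∀ i, 0 < β i) (i k : Fin K) :
    ∫ x, Real.log (x i / x k) * concreteDensity K β τ x ∂(simplexMeasure K)
      = (1 / τ) * Real.log (β i / β k) := by
  obtain ⟨n, rfl⟩ : ∃ n, K = n + 1 := ⟨K - 1, by omega⟩
  have := isProbabilityMeasure_expMeasure one_pos
  rw [← integral_concreteMeasure (fun j => (hβ j).le) hτ.le fun x => Real.log (x i / x k),
    concreteMeasure_eq_map_pi_expMeasure hβ hτ,
    integral_map (Measurable.aemeasurable (by fun_prop))
      (Measurable.aestronglyMeasurable (by fun_prop))]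
  calc ∫ e : Fin (n + 1) → ℝ, Real.log (normalizeSum (fun j => (β j / e j) ^ (1 / τ)) i /
        normalizeSum (fun j => (β j / e j) ^ (1 / τ)) k) ∂(Measure.pi fun _ => expMeasure 1)
      = ∫ e : Fin (n + 1) → ℝ, 1 / τ * (Real.log (β i / β k) +
          (Real.log (e k) - Real.log (e i))) ∂(Measure.pi fun _ => expMeasure 1) :=
        integral_congr_ae <| (ae_forall_pos_pi_expMeasure one_pos).mono fun e he =>
          log_normalizeSum_div_normalizeSum hβ he (1 / τ) i k
    _ = 1 / τ * Real.log (β i / β k) := by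
        rw [integral_const_mul, integral_add (integrable_const _)
          (integrable_log_sub_log_pi_expMeasure one_pos i k), integral_const, probReal_univ,
          one_smul, integral_log_sub_log_pi_expMeasure one_pos, add_zero]
end
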